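/- arXiv:1810.13069 — 8 statements merged into one kernel-verified Lean document; each statement's English description precedes it below -/
import Mathlib

section
/- Let d be a positive integer divisible by 4, let K ≥ 1 be an integer, and let 0 < ε < 1/(d√d). Let W and Ũ be subsets of {1,…,d} with |W| = |Ũ| = d/4, and set δ = d/4 − |Ũ ∩ W|, a = (d/4)·ε/√d and b = |Ũ ∩ W|·ε/√d. Then K·e^a/(1 + K·e^a) − K·e^b/(1 + K·e^b) ≥ δ·ε/(4e²·K·√d). (This is Lemma 3 of the paper, the revenue-gap lemma in the regret lower bound construction, with the explicit constant 1/(4e²) in place of the paper's 1/4, which is what its proof yields.) -/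
/-! Put `x = K e^a` and `y = K e^b`, so that the revenue gap is `(x - y) / ((1 + x) (1 + y))`. The
tangent to `exp` at `b` gives `x - y ≥ y (a - b)`, and `y / ((1 + x) (1 + y)) ≥ 1 / (4 x)` as soon
as `1 ≤ y ≤ x`. Hence the gap is at least `(a - b) / (4 K e^a)`, where `e^a ≤ e²` for `a ≤ 2`. -/

open Finset Real

/-- The MNL expected revenue of an assortment of `K` identical items of mean utility `u` and unit
revenue, against an outside option of utility `0`. The number of items is allowed to be any real, so
that it can also stand for a common attraction factor. -/
noncomputable def mnlRevenue (K u : ℝ) : ℝ :=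
  K * exp u / (1 + K * exp u)

theorem exp_mul_sub_le_exp_sub_exp (a b : ℝ) : exp b * (a - b) ≤ exp a - exp b := by
  calc exp b * (a - b) ≤ exp b * (exp (a - b) - 1) :=
        mul_le_mul_of_nonneg_left (le_sub_iff_add_le.2 (add_one_le_exp _)) (exp_pos b).le
    _ = exp a - exp b := by rw [mul_sub_one, ← exp_add, add_sub_cancel]

theorem mnlRevenue_sub {K : ℝ} (hK : 0 ≤ K) (a b : ℝ) :
    mnlRevenue K a - mnlRevenue K b =
      K * (exp a - exp b) / ((1 + K * exp a) * (1 + K * exp b)) := by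
  have ha : 1 + K * exp a ≠ 0 := by positivity
  have hb : 1 + K * exp b ≠ 0 := by positivity
  rw [mnlRevenue, mnlRevenue, div_sub_div _ _ ha hb]
  ring

theorem one_div_four_mul_le_div {x y : ℝ} (hy : 1 ≤ y) (hyx : y ≤ x) :
    1 / (4 * x) ≤ y / ((1 + x) * (1 + y)) := by
  have hx : 1 ≤ x := hy.trans hyx
  calc 1 / (4 * x) = y / ((2 * x) * (2 * y)) := by field_simp; norm_num
    _ ≤ y / ((1 + x) * (1 + y)) := by gcongr <;> linarith

theorem sub_div_four_mul_exp_le_mnlRevenue_sub {K a b : ℝ} (hK : 0 ≤ K) (hKb : 1 ≤ K * exp b)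
    (hba : b ≤ a) :
    (a - b) / (4 * (K * exp a)) ≤ mnlRevenue K a - mnlRevenue K b := by
  have hslope : 1 / (4 * (K * exp a)) ≤ K * exp b / ((1 + K * exp a) * (1 + K * exp b)) :=
    one_div_four_mul_le_div hKb (by gcongr)
  calc (a - b) / (4 * (K * exp a)) = (a - b) * (1 / (4 * (K * exp a))) := by
        rw [mul_one_div]
    _ ≤ (a - b) * (K * exp b / ((1 + K * exp a) * (1 + K * exp b))) :=
        mul_le_mul_of_nonneg_left hslope (sub_nonneg.2 hba)
    _ = K * (exp b * (a - b)) / ((1 + K * exp a) * (1 + K * exp b)) := by ring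
    _ ≤ K * (exp a - exp b) / ((1 + K * exp a) * (1 + K * exp b)) := by
        gcongr
        exact exp_mul_sub_le_exp_sub_exp a b
    _ = mnlRevenue K a - mnlRevenue K b := (mnlRevenue_sub hK a b).symm

theorem stmt1_general {ι : Type*} [DecidableEq ι] (W U : Finset ι) {K ε s : ℝ} (hK : 1 ≤ K)
    (hε : 0 ≤ ε) (hs : 0 < s) (hWs : #W * ε ≤ 2 * s) :
    #(W \ U) * ε / (4 * exp 1 ^ 2 * K * s) ≤
      mnlRevenue K (#W * ε / s) - mnlRevenue K (#(U ∩ W) * ε / s) := by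
  set a := #W * ε / s with ha
  set b := #(U ∩ W) * ε / s with hb
  have hb0 : 0 ≤ b := by positivity
  have hba : b ≤ a := by
    rw [ha, hb]
    gcongr
    exact inter_subset_right
  have hab : a - b = #(W \ U) * ε / s := by
    rw [ha, hb, card_sdiff, Nat.cast_sub (card_le_card inter_subset_right)]
    ring
  have hKb : 1 ≤ K * exp b := one_le_mul_of_one_le_of_one_le hK (one_le_exp hb0)
  have hexp : exp a ≤ exp 1 ^ 2 := by
    rw [← exp_nat_mul, exp_le_exp]
    simpa [ha, div_le_iff₀ hs] using hWs
  calc #(W \ U) * ε / (4 * exp 1 ^ 2 * K * s) = (a - b) / (4 * (K * exp 1 ^ 2)) := by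
        rw [hab, div_div]
        ring_nf
    _ ≤ (a - b) / (4 * (K * exp a)) :=
        div_le_div_of_nonneg_left (sub_nonneg.2 hba) (by positivity) (by gcongr)
    _ ≤ mnlRevenue K a - mnlRevenue K b :=
        sub_div_four_mul_exp_le_mnlRevenue_sub (by positivity) hKb hba

theorem mul_le_two_mul_sqrt_of_lt_one_div {d m : ℕ} (hd : 0 < d) (hm : m ≤ d) {ε : ℝ}
    (hε0 : 0 ≤ ε) (hε1 : ε < 1 / (d * √d)) : m * ε ≤ 2 * √d := by
  have hsqrt : 1 ≤ √(d : ℝ) := one_le_sqrt.2 (by exact_mod_cast hd)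
  have hdε : d * ε * √d < 1 := by
    rw [lt_div_iff₀ (by positivity)] at hε1
    linarith
  calc m * ε ≤ d * ε := by gcongr
    _ ≤ d * ε * √d := le_mul_of_one_le_right (by positivity) hsqrt
    _ ≤ 2 * √d := by linarith

/-- revenue-gap lemma in the regret lower bound construction
(Lemma 3 of the paper, with the explicit constant 1/(4e²)). -/
theorem stmt1 (d K : ℕ) (hd : 0 < d) (hd4 : 4 ∣ d) (hK : 1 ≤ K)
    (ε : ℝ) (hε0 : 0 < ε) (hε1 : ε < 1 / (d * Real.sqrt d))
    (W U : Finset (Fin d)) (hW : W.card = d / 4) (hU : U.card = d / 4)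
    (δ : ℕ) (hδ : δ = d / 4 - (U ∩ W).card)
    (a b : ℝ) (ha : a = ((d / 4 : ℕ) : ℝ) * ε / Real.sqrt d)
    (hb : b = ((U ∩ W).card : ℝ) * ε / Real.sqrt d) :
    (δ : ℝ) * ε / (4 * Real.exp 1 ^ 2 * K * Real.sqrt d) ≤
      K * Real.exp a / (1 + K * Real.exp a) - K * Real.exp b / (1 + K * Real.exp b) := by
  have hWs : #W * ε ≤ 2 * √d :=
    mul_le_two_mul_sqrt_of_lt_one_div hd (card_finset_fin_le W) hε0.le hε1
  have hgap := stmt1_general W U (Nat.one_le_cast.2 hK) hε0.le (sqrt_pos.2 (Nat.cast_pos.2 hd)) hWs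
  rwa [card_sdiff, hW, ← hδ, ← ha, ← hb] at hgap
end

section
/- Let d ≥ 1 and T₀ < T be integers. Let I_{T₀} be a real symmetric positive definite d×d matrix, let M_t for t = T₀+1, …, T be real symmetric positive semidefinite d×d matrices, and define I_t = I_{t−1} + M_t for t = T₀+1, …, T. Then Σ_{t=T₀+1}^{T} min{1, ‖I_{t−1}^{−1/2} M_t I_{t−1}^{−1/2}‖_op²} ≤ 4·log( det(I_T) / det(I_{T₀}) ). (Elliptical potential lemma; first inequality of Lemma 6 of the paper.) -/
/-- The ℓ₂→ℓ₂ operator (spectral) norm of a real square matrix. -/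
noncomputable def l2OpNorm {d : ℕ} (M : Matrix (Fin d) (Fin d) ℝ) : ℝ :=
  ‖Matrix.toEuclideanCLM (𝕜 := ℝ) M‖

/-! Writing `S = I_{t-1}` and `A = S^{-1/2} M_t S^{-1/2}`, one has
`det I_t / det I_{t-1} = det (1 + A) = ∏ (1 + λᵢ)`, where the `λᵢ ≥ 0` are the eigenvalues of `A`.
This product is at least `1 + max λᵢ = 1 + ‖A‖`, and `min 1 x² ≤ log₂ (1 + x)` for `x ≥ 0`, so each
summand is at most `log₂ (det I_t / det I_{t-1})`; the bounds telescope. The base `2` is optimal: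
equality holds for `1 × 1` matrices with `M_t = I_{t-1}`. -/

section Scalar

open Real

lemma min_one_sq_le_logb_two_one_add {x : ℝ} (hx : 0 ≤ x) : min 1 (x ^ 2) ≤ logb 2 (1 + x) := by
  set p := min 1 (x ^ 2)
  have hp_nonneg : 0 ≤ p := le_min zero_le_one (sq_nonneg x)
  have hp_le_one : p ≤ 1 := min_le_left _ _
  have hp_le : p ≤ x := by
    rcases le_total x 1 with hx1 | hx1
    · exact (min_le_right _ _).trans (pow_le_of_le_one hx hx1 two_ne_zero)
    · exact hp_le_one.trans hx1
  rw [le_logb_iff_rpow_le one_lt_two (by positivity)]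
  calc (2 : ℝ) ^ p = (1 + 1) ^ p := by rw [one_add_one_eq_two]
    _ ≤ 1 + p * 1 := rpow_one_add_le_one_add_mul_self (by norm_num) hp_nonneg hp_le_one
    _ ≤ 1 + x := by rw [mul_one]; gcongr

lemma le_four_mul_log_of_le_logb_two {s y : ℝ} (hs : 0 ≤ s) (h : s ≤ logb 2 y) :
    s ≤ 4 * log y := by
  have hlog2 : 0.5 < log 2 := by linarith [log_two_gt_d9]
  rw [← log_div_log, le_div_iff₀ (log_pos one_lt_two)] at h
  nlinarith

lemma one_add_norm_le_prod_one_add {ι : Type*} [Fintype ι] {v : ι → ℝ} (hv : 0 ≤ v) :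
    1 + ‖v‖ ≤ ∏ i, (1 + v i) := by
  have one_le (i : ι) : 1 ≤ 1 + v i := le_add_of_nonneg_right (hv i)
  rw [← le_sub_iff_add_le',
    pi_norm_le_iff_of_nonneg (sub_nonneg.2 (Finset.one_le_prod fun i _ ↦ one_le i))]
  intro i
  rw [norm_of_nonneg (hv i), le_sub_iff_add_le']
  exact Multiset.mem_le_prod_of_one_le one_le (Finset.mem_univ i)

end Scalar

section Matrix

open Matrix
open scoped Matrix.Norms.L2Operator ComplexOrder

lemma det_one_add_mul_mul_mul_det {R m n : Type*} [CommRing R] [Fintype m] [DecidableEq m]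
    [Fintype n] [DecidableEq n] {B : Matrix m n R} {C : Matrix n m R} {S : Matrix n n R}
    (h : C * B * S = 1) (M : Matrix n n R) :
    (1 + B * M * C).det * S.det = (S + M).det := by
  have hinv : S * (C * B) = 1 := mul_eq_one_comm.1 h
  calc (1 + B * M * C).det * S.det = S.det * (1 + C * B * M).det := by
        rw [det_one_add_mul_comm, mul_comm, ← Matrix.mul_assoc C]
    _ = (S + M).det := by rw [← det_mul, mul_add, mul_one, ← Matrix.mul_assoc, hinv, one_mul]

lemma posDef_of_eq_add_posSemidef {R n : Type*} [Ring R] [PartialOrder R] [StarRing R]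
    [AddLeftMono R] {T₀ T : ℕ} {I M : ℕ → Matrix n n R} (hI0 : (I T₀).PosDef)
    (hM : ∀ t, T₀ < t → t ≤ T → (M t).PosSemidef)
    (hrec : ∀ t, T₀ < t → t ≤ T → I t = I (t - 1) + M t) {t : ℕ} (h₀ : T₀ ≤ t) (h : t ≤ T) :
    (I t).PosDef := by
  induction t, h₀ using Nat.le_induction with
  | base => exact hI0
  | succ t h₀ ih =>
    rw [hrec (t + 1) (by lia) h, Nat.add_sub_cancel]
    exact (ih (by lia)).add_posSemidef (hM (t + 1) (by lia) h)

variable {𝕜 n : Type*} [RCLike 𝕜] [Fintype n] [DecidableEq n] {A B M S : Matrix n n 𝕜}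

lemma norm_eq_norm_eigenvalues (hA : A.IsHermitian) : ‖A‖ = ‖hA.eigenvalues‖ := by
  conv_lhs => rw [hA.spectral_theorem]
  rw [Unitary.conjStarAlgAut_apply, ← Unitary.coe_star, CStarRing.norm_mul_coe_unitary,
    CStarRing.norm_coe_unitary_mul, l2_opNorm_diagonal]
  simp [Pi.norm_def]

lemma det_one_add_eq_prod_eigenvalues (hA : A.IsHermitian) :
    (1 + A).det = ∏ i, (1 + hA.eigenvalues i : 𝕜) := by
  conv_lhs => rw [hA.spectral_theorem]
  rw [Unitary.conjStarAlgAut_apply, mul_assoc, det_one_add_mul_comm, mul_assoc,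
    Unitary.coe_star_mul_self, mul_one, ← diagonal_one, diagonal_add, det_diagonal]
  rfl

lemma one_add_norm_le_norm_det_one_add (hA : A.PosSemidef) : 1 + ‖A‖ ≤ ‖(1 + A).det‖ := by
  have hnonneg : 0 ≤ hA.isHermitian.eigenvalues := hA.eigenvalues_nonneg
  calc 1 + ‖A‖ = 1 + ‖hA.isHermitian.eigenvalues‖ := by rw [norm_eq_norm_eigenvalues]
    _ ≤ ∏ i, (1 + hA.isHermitian.eigenvalues i) := one_add_norm_le_prod_one_add hnonneg
    _ ≤ ‖(1 + A).det‖ := by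
      rw [det_one_add_eq_prod_eigenvalues hA.isHermitian]
      exact_mod_cast (le_abs_self _).trans_eq (RCLike.norm_ofReal (K := 𝕜) _).symm

lemma min_one_sq_norm_le_logb_two_det_sub (hS : S.PosDef) (hM : M.PosSemidef)
    (hB : B.IsHermitian) (hBS : B * B * S = 1) :
    min 1 (‖B * M * B‖ ^ 2) ≤ Real.logb 2 ‖(S + M).det‖ - Real.logb 2 ‖S.det‖ := by
  have hA : (B * M * B).PosSemidef := by
    simpa only [hB.eq] using hM.mul_mul_conjTranspose_same B
  have hSdet : ‖S.det‖ ≠ 0 := norm_ne_zero_iff.2 hS.det_pos.ne'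
  have hSMdet : ‖(S + M).det‖ ≠ 0 := norm_ne_zero_iff.2 (hS.add_posSemidef hM).det_pos.ne'
  calc min 1 (‖B * M * B‖ ^ 2) ≤ Real.logb 2 (1 + ‖B * M * B‖) :=
        min_one_sq_le_logb_two_one_add (norm_nonneg _)
    _ ≤ Real.logb 2 ‖(1 + B * M * B).det‖ :=
        Real.logb_le_logb_of_le one_lt_two (by positivity) (one_add_norm_le_norm_det_one_add hA)
    _ = Real.logb 2 ‖(S + M).det‖ - Real.logb 2 ‖S.det‖ := by
        rw [← Real.logb_div hSMdet hSdet, ← det_one_add_mul_mul_mul_det hBS, norm_mul,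
          mul_div_cancel_right₀ _ hSdet]

-- Over `𝕜` the determinants are positive elements of a possibly complex field; the norm reads them
-- as real numbers.
theorem stmt2_general {T₀ T : ℕ} (hT : T₀ ≤ T) {I M B : ℕ → Matrix n n 𝕜} (hI0 : (I T₀).PosDef)
    (hM : ∀ t, T₀ < t → t ≤ T → (M t).PosSemidef)
    (hrec : ∀ t, T₀ < t → t ≤ T → I t = I (t - 1) + M t)
    (hB : ∀ t, T₀ ≤ t → t < T → (B t).IsHermitian ∧ B t * B t * I t = 1) :
    ∑ t ∈ Finset.Icc (T₀ + 1) T, min 1 (‖B (t - 1) * M t * B (t - 1)‖ ^ 2)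
      ≤ Real.logb 2 ‖(I T).det / (I T₀).det‖ := by
  have hI {t : ℕ} (h₀ : T₀ ≤ t) (h : t ≤ T) : (I t).PosDef :=
    posDef_of_eq_add_posSemidef hI0 hM hrec h₀ h
  have hdet {t : ℕ} (h₀ : T₀ ≤ t) (h : t ≤ T) : ‖(I t).det‖ ≠ 0 :=
    norm_ne_zero_iff.2 (hI h₀ h).det_pos.ne'
  rw [← Finset.Ico_add_one_right_eq_Icc, ← Finset.sum_Ico_add', norm_div,
    Real.logb_div (hdet hT le_rfl) (hdet le_rfl hT),
    ← Finset.sum_Ico_sub (fun t ↦ Real.logb 2 ‖(I t).det‖) hT]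
  refine Finset.sum_le_sum fun t ht ↦ ?_
  obtain ⟨h₀, h⟩ := Finset.mem_Ico.1 ht
  rw [hrec (t + 1) (by lia) h, Nat.add_sub_cancel]
  exact min_one_sq_norm_le_logb_two_det_sub (hI h₀ h.le) (hM (t + 1) (by lia) h)
    (hB t h₀ h).1 (hB t h₀ h).2

end Matrix

/-- elliptical potential lemma (first inequality of Lemma 6 of the paper).
Here `B t` plays the role of `I_t^{-1/2}`: it is characterized as the unique positive
definite matrix with `B t * B t * I t = 1`, i.e. `(B t)² = (I t)⁻¹`. -/
theorem stmt2 (d T₀ T : ℕ) (hd : 1 ≤ d) (hT : T₀ < T)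
    (I M B : ℕ → Matrix (Fin d) (Fin d) ℝ)
    (hI0 : (I T₀).PosDef)
    (hM : ∀ t, T₀ < t → t ≤ T → (M t).PosSemidef)
    (hrec : ∀ t, T₀ < t → t ≤ T → I t = I (t - 1) + M t)
    (hB : ∀ t, T₀ ≤ t → t < T → (B t).PosDef ∧ B t * B t * I t = 1) :
    ∑ t ∈ Finset.Icc (T₀ + 1) T,
        min 1 (l2OpNorm (B (t - 1) * M t * B (t - 1)) ^ 2)
      ≤ 4 * Real.log ((I T).det / (I T₀).det) := by
  rw [← Real.log_abs]
  exact le_four_mul_log_of_le_logb_two (Finset.sum_nonneg fun _ _ ↦ by positivity)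
    (stmt2_general hT.le hI0 hM hrec fun t h₀ h ↦ (hB t h₀ h).imp_left Matrix.PosDef.isHermitian)
end

section
/- Let p and q be probability vectors on a finite index set (p_j, q_j ≥ 0 with Σ_j p_j = Σ_j q_j = 1), with p_j > 0 and q_j > 0 for all j, and let M = max_j |q_j − p_j| / p_j. Then Σ_j p_j · log(p_j / q_j) ≥ (1 / (2(1+M)²)) · Σ_j (q_j − p_j)² / p_j. (Kullback–Leibler vs. chi-square lower bound; the key estimate in the proof of Lemma S-MV of the paper.) -/
/-!
Put `x = q / p`. Pointwise, `x - 1 - log x ≥ (x - 1)² / (2 max 1 x)`: for `x ≥ 1` this is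
`log x ≤ sinh (log x)`, and for `x ≤ 1` it is the second-order truncation of the power series of
`-log (1 - t)` at `t = 1 - x`. Multiplying by `p` gives
`p log (p / q) + (q - p) ≥ (q - p)² / (2 max p q)`, and the linear term `q - p` has nonpositive
total mass. Only the first power of an upper bound for `q / p` is lost.
-/

open MeasureTheory

theorem log_le_sub_inv_div_two {x : ℝ} (hx : 1 ≤ x) : Real.log x ≤ (x - x⁻¹) / 2 := by
  rw [← Real.sinh_log (zero_lt_one.trans_le hx)]
  exact Real.self_le_sinh_iff.2 (Real.log_nonneg hx)

theorem sum_range_pow_div_le_neg_log_one_sub {x : ℝ} (hx₀ : 0 ≤ x) (hx₁ : x < 1) (n : ℕ) :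
    ∑ i ∈ Finset.range n, x ^ (i + 1) / (i + 1) ≤ -Real.log (1 - x) :=
  sum_le_hasSum _ (fun _ _ ↦ by positivity)
    (Real.hasSum_pow_div_log_of_abs_lt_one (by rwa [abs_of_nonneg hx₀]))

theorem sq_sub_one_div_two_mul_max_le_sub_one_sub_log {x : ℝ} (hx : 0 < x) :
    (x - 1) ^ 2 / (2 * max 1 x) ≤ x - 1 - Real.log x := by
  rcases le_total 1 x with h | h
  · calc (x - 1) ^ 2 / (2 * max 1 x) = x - 1 - (x - x⁻¹) / 2 := by
          rw [max_eq_right h]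
          field_simp
          ring
      _ ≤ x - 1 - Real.log x := by gcongr; exact log_le_sub_inv_div_two h
  · have hlog : (1 - x) + (1 - x) ^ 2 / 2 ≤ -Real.log x := by
      simpa [Finset.sum_range_succ, one_add_one_eq_two] using
        sum_range_pow_div_le_neg_log_one_sub (sub_nonneg.2 h) (sub_lt_self 1 hx) 2
    rw [max_eq_left h]
    linarith

theorem sq_sub_div_two_mul_max_le_mul_log_div_add_sub {a b : ℝ} (ha : 0 < a) (hb : 0 < b) :
    (b - a) ^ 2 / (2 * max a b) ≤ a * Real.log (a / b) + (b - a) := by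
  have hmax : max a b = a * max 1 (b / a) := by
    rw [mul_max_of_nonneg _ _ ha.le, mul_one, mul_div_cancel₀ b ha.ne']
  have hlog : Real.log (a / b) = -Real.log (b / a) := by rw [← Real.log_inv, inv_div]
  calc (b - a) ^ 2 / (2 * max a b)
      = a * ((b / a - 1) ^ 2 / (2 * max 1 (b / a))) := by
        rw [hmax]
        field_simp
    _ ≤ a * (b / a - 1 - Real.log (b / a)) := by
        gcongr
        exact sq_sub_one_div_two_mul_max_le_sub_one_sub_log (div_pos hb ha)
    _ = a * Real.log (a / b) + (b - a) := by
        rw [hlog]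
        field_simp
        ring

theorem sq_sub_div_le_two_mul_mul_log_div_add_sub {a b L : ℝ} (ha : 0 < a) (hb : 0 < b)
    (hL : 1 ≤ L) (hab : b ≤ L * a) :
    (b - a) ^ 2 / a ≤ 2 * L * (a * Real.log (a / b) + (b - a)) := by
  have hmax : max a b ≤ L * a := max_le (le_mul_of_one_le_left ha.le hL) hab
  calc (b - a) ^ 2 / a = 2 * L * ((b - a) ^ 2 / (2 * (L * a))) := by field_simp
    _ ≤ 2 * L * ((b - a) ^ 2 / (2 * max a b)) := by gcongr
    _ ≤ 2 * L * (a * Real.log (a / b) + (b - a)) := by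
        gcongr
        exact sq_sub_div_two_mul_max_le_mul_log_div_add_sub ha hb

section Densities

variable {α : Type*} [MeasurableSpace α] {μ : Measure α} {p q : α → ℝ} {L : ℝ}

theorem integrable_sq_sub_div (hp : ∀ᵐ x ∂μ, 0 < p x) (hq : ∀ᵐ x ∂μ, 0 < q x)
    (hpi : Integrable p μ) (hqi : Integrable q μ)
    (hlog : Integrable (fun x ↦ p x * Real.log (p x / q x)) μ)
    (hL : 1 ≤ L) (hqp : ∀ᵐ x ∂μ, q x ≤ L * p x) :
    Integrable (fun x ↦ (q x - p x) ^ 2 / p x) μ := by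
  refine ((hlog.add (hqi.sub hpi)).const_mul (2 * L)).mono' ?_ ?_
  · exact (((hqi.aemeasurable.sub hpi.aemeasurable).pow_const 2).div
      hpi.aemeasurable).aestronglyMeasurable
  · filter_upwards [hp, hq, hqp] with x hpx hqx hqpx
    rw [Real.norm_of_nonneg (by positivity)]
    exact sq_sub_div_le_two_mul_mul_log_div_add_sub hpx hqx hL hqpx

theorem stmt4_general (hp : ∀ᵐ x ∂μ, 0 < p x) (hq : ∀ᵐ x ∂μ, 0 < q x)
    (hpi : Integrable p μ) (hqi : Integrable q μ) (hmass : ∫ x, q x ∂μ ≤ ∫ x, p x ∂μ)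
    (hlog : Integrable (fun x ↦ p x * Real.log (p x / q x)) μ)
    (hL : 1 ≤ L) (hqp : ∀ᵐ x ∂μ, q x ≤ L * p x) :
    (1 / (2 * L)) * ∫ x, (q x - p x) ^ 2 / p x ∂μ ≤ ∫ x, p x * Real.log (p x / q x) ∂μ := by
  rw [one_div_mul_eq_div, div_le_iff₀' (by positivity)]
  calc ∫ x, (q x - p x) ^ 2 / p x ∂μ
      ≤ ∫ x, 2 * L * (p x * Real.log (p x / q x) + (q x - p x)) ∂μ := by
        refine integral_mono_ae (integrable_sq_sub_div hp hq hpi hqi hlog hL hqp)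
          ((hlog.add (hqi.sub hpi)).const_mul (2 * L)) ?_
        filter_upwards [hp, hq, hqp] with x hpx hqx hqpx
        exact sq_sub_div_le_two_mul_mul_log_div_add_sub hpx hqx hL hqpx
    _ = 2 * L * (∫ x, p x * Real.log (p x / q x) ∂μ + (∫ x, q x ∂μ - ∫ x, p x ∂μ)) := by
        rw [integral_const_mul, integral_add (g := fun x ↦ q x - p x) hlog (hqi.sub hpi),
          integral_sub hqi hpi]
    _ ≤ 2 * L * ∫ x, p x * Real.log (p x / q x) ∂μ := by
        gcongr
        linarith

end Densities

section FiniteSums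

variable {ι : Type*} [Fintype ι] {p q : ι → ℝ}

theorem sum_sq_sub_div_le_sum_mul_log_div {L : ℝ} (hp : ∀ j, 0 < p j) (hq : ∀ j, 0 < q j)
    (hmass : ∑ j, q j ≤ ∑ j, p j) (hL : 1 ≤ L) (hqp : ∀ j, q j ≤ L * p j) :
    (1 / (2 * L)) * ∑ j, (q j - p j) ^ 2 / p j ≤ ∑ j, p j * Real.log (p j / q j) := by
  let _ : MeasurableSpace ι := ⊤
  simpa only [integral_count] using stmt4_general (μ := Measure.count) (.of_forall hp)
    (.of_forall hq) .of_finite .of_finite (by simpa only [integral_count] using hmass)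
    .of_finite hL (.of_forall hqp)

theorem sum_sq_sub_div_le_sum_mul_log_div_of_abs_sub_div_le [Nonempty ι] {M : ℝ}
    (hp : ∀ j, 0 < p j) (hq : ∀ j, 0 < q j) (hmass : ∑ j, q j ≤ ∑ j, p j)
    (hM : ∀ j, |q j - p j| / p j ≤ M) :
    (1 / (2 * (1 + M) ^ 2)) * ∑ j, (q j - p j) ^ 2 / p j
      ≤ ∑ j, p j * Real.log (p j / q j) := by
  have hM₀ : 0 ≤ M := by
    obtain ⟨j⟩ := ‹Nonempty ι›
    exact (div_nonneg (abs_nonneg _) (hp j).le).trans (hM j)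
  have hL : 1 ≤ 1 + M := le_add_of_nonneg_right hM₀
  have hqp (j : ι) : q j ≤ (1 + M) * p j := by
    linarith [le_of_abs_le ((div_le_iff₀ (hp j)).1 (hM j))]
  calc (1 / (2 * (1 + M) ^ 2)) * ∑ j, (q j - p j) ^ 2 / p j
      ≤ (1 / (2 * (1 + M))) * ∑ j, (q j - p j) ^ 2 / p j := by
        gcongr
        · exact Finset.sum_nonneg fun j _ ↦ div_nonneg (sq_nonneg _) (hp j).le
        · exact le_self_pow₀ hL two_ne_zero
    _ ≤ ∑ j, p j * Real.log (p j / q j) :=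
        sum_sq_sub_div_le_sum_mul_log_div hp hq hmass hL hqp

end FiniteSums

/-- Kullback–Leibler vs. chi-square lower bound (key estimate in the
proof of Lemma S-MV of the paper). -/
theorem stmt4 {ι : Type*} [Fintype ι] [Nonempty ι]
    (p q : ι → ℝ) (hp : ∀ j, 0 < p j) (hq : ∀ j, 0 < q j)
    (hp1 : ∑ j, p j = 1) (hq1 : ∑ j, q j = 1)
    (M : ℝ) (hM : M = Finset.univ.sup' Finset.univ_nonempty (fun j => |q j - p j| / p j)) :
    (1 / (2 * (1 + M) ^ 2)) * ∑ j, (q j - p j) ^ 2 / p j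
      ≤ ∑ j, p j * Real.log (p j / q j) :=
  sum_sq_sub_div_le_sum_mul_log_div_of_abs_sub_div_le hp hq (hq1.trans hp1.symm).le fun j ↦
    hM ▸ Finset.le_sup' (fun j => |q j - p j| / p j) (Finset.mem_univ j)
end

section
/- Let p and q be probability vectors on a finite index set (p_j, q_j ≥ 0 with Σ_j p_j = Σ_j q_j = 1), with p_j > 0 and |q_j − p_j| ≤ p_j/2 for all j. Then (i) |log(q_j / p_j)| ≤ 1 for every j, and (ii) Σ_j p_j · log²(q_j / p_j) ≤ 8 · Σ_j p_j · log(p_j / q_j). (This is the content of Lemma S-MV of the paper — the bounds M ≤ 1 and V² ≤ 8|F_t(θ)| on the martingale increments — stated with the proximity hypothesis its proof requires.) -/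
/-!
Put `L = log (q / p)`. Since `p * exp L = q`, the pointwise inequality `L² ≤ 4 (exp L - 1 - L)`,
valid for `L ≥ -2` because `(1 + L / 2)² ≤ exp L`, becomes
`p * L² ≤ 4 (p * log (p / q) + (q - p))`. In the sum the linear terms `q - p` contribute
`∑ q - ∑ p ≤ 0`, which leaves four times the Kullback–Leibler divergence.
-/

open Real

theorem sq_le_four_mul_exp_sub_one_sub {x : ℝ} (hx : -2 ≤ x) : x ^ 2 ≤ 4 * (exp x - 1 - x) := by
  have hsq : (1 + x / 2) ^ 2 ≤ exp x := by
    simpa [neg_div] using one_sub_div_pow_le_exp_neg (n := 2) (t := -x) (by push_cast; linarith)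
  linarith

theorem log_sq_le_four_mul_sub_one_sub_log {r : ℝ} (hr : exp (-2) ≤ r) :
    log r ^ 2 ≤ 4 * (r - 1 - log r) := by
  have hr0 : 0 < r := (exp_pos _).trans_le hr
  simpa only [exp_log hr0] using sq_le_four_mul_exp_sub_one_sub ((le_log_iff_exp_le hr0).2 hr)

theorem abs_log_le_of_exp_neg_le {r a : ℝ} (hlower : exp (-a) ≤ r) (hupper : r ≤ exp a) :
    |log r| ≤ a := by
  have hr0 : 0 < r := (exp_pos _).trans_le hlower
  exact abs_le.2 ⟨(le_log_iff_exp_le hr0).2 hlower, (log_le_iff_le_exp hr0).2 hupper⟩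

theorem one_sub_exp_neg_le_exp_sub_one (a : ℝ) : 1 - exp (-a) ≤ exp a - 1 := by
  linarith [add_one_le_exp a, add_one_le_exp (-a)]

theorem abs_log_div_le_of_abs_sub_le {x y a : ℝ} (hx : 0 < x)
    (hxy : |y - x| ≤ (1 - exp (-a)) * x) : |log (y / x)| ≤ a := by
  obtain ⟨hlower, hupper⟩ := abs_le.1 hxy
  apply abs_log_le_of_exp_neg_le
  · rw [le_div_iff₀ hx]
    linarith
  · rw [div_le_iff₀ hx]
    linarith [mul_le_mul_of_nonneg_right (one_sub_exp_neg_le_exp_sub_one a) hx.le]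

theorem sub_le_mul_log_div {x y : ℝ} (hx : 0 < x) (hy : 0 < y) : x - y ≤ x * log (x / y) := by
  calc x - y = x * (1 - (x / y)⁻¹) := by field_simp
    _ ≤ x * log (x / y) := by gcongr; exact one_sub_inv_le_log_of_pos (div_pos hx hy)

theorem mul_log_div_sq_le {x y : ℝ} (hx : 0 < x) (hxy : exp (-2) * x ≤ y) :
    x * log (y / x) ^ 2 ≤ 4 * (x * log (x / y) + (y - x)) := by
  calc x * log (y / x) ^ 2 ≤ x * (4 * (y / x - 1 - log (y / x))) := by
        gcongr
        exact log_sq_le_four_mul_sub_one_sub_log ((le_div_iff₀ hx).2 hxy)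
    _ = 4 * (x * log (x / y) + (y - x)) := by
        rw [← inv_div x y, log_inv]
        field_simp
        ring

section Sums

variable {ι : Type*} {p q : ι → ℝ}

theorem summable_mul_log_div {c : ℝ} (hc : 0 < c) (hp : ∀ j, 0 < p j)
    (hpq : ∀ j, c * p j ≤ q j) (hps : Summable p) (hqs : Summable q) :
    Summable fun j ↦ p j * log (p j / q j) := by
  have hq : ∀ j, 0 < q j := fun j ↦ (mul_pos hc (hp j)).trans_le (hpq j)
  have hupper : ∀ j, p j * log (p j / q j) ≤ p j * log c⁻¹ := fun j ↦ by
    have hratio : p j / q j ≤ c⁻¹ := by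
      rw [div_le_iff₀ (hq j), le_inv_mul_iff₀ hc]
      exact hpq j
    exact mul_le_mul_of_nonneg_left (log_le_log (div_pos (hp j) (hq j)) hratio) (hp j).le
  have hshifted : Summable fun j ↦ p j * log (p j / q j) - (p j - q j) :=
    .of_nonneg_of_le (fun j ↦ sub_nonneg.2 (sub_le_mul_log_div (hp j) (hq j)))
      (fun j ↦ sub_le_sub_right (hupper j) _) ((hps.mul_right _).sub (hps.sub hqs))
  simpa only [sub_add_cancel] using hshifted.add (hps.sub hqs)

theorem summable_mul_log_div_sq (hp : ∀ j, 0 < p j) (hpq : ∀ j, exp (-2) * p j ≤ q j)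
    (hps : Summable p) (hqs : Summable q) : Summable fun j ↦ p j * log (q j / p j) ^ 2 :=
  .of_nonneg_of_le (fun j ↦ mul_nonneg (hp j).le (sq_nonneg _))
    (fun j ↦ mul_log_div_sq_le (hp j) (hpq j))
    (((summable_mul_log_div (exp_pos _) hp hpq hps hqs).add (hqs.sub hps)).mul_left 4)

theorem tsum_mul_log_div_sq_le (hp : ∀ j, 0 < p j) (hpq : ∀ j, exp (-2) * p j ≤ q j)
    (hps : Summable p) (hqs : Summable q) (hmass : ∑' j, q j ≤ ∑' j, p j) :
    ∑' j, p j * log (q j / p j) ^ 2 ≤ 4 * ∑' j, p j * log (p j / q j) := by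
  have hkl := summable_mul_log_div (exp_pos _) hp hpq hps hqs
  calc ∑' j, p j * log (q j / p j) ^ 2
      ≤ ∑' j, 4 * (p j * log (p j / q j) + (q j - p j)) :=
        (summable_mul_log_div_sq hp hpq hps hqs).tsum_le_tsum
          (fun j ↦ mul_log_div_sq_le (hp j) (hpq j)) ((hkl.add (hqs.sub hps)).mul_left 4)
    _ = 4 * (∑' j, p j * log (p j / q j) + (∑' j, q j - ∑' j, p j)) := by
        rw [tsum_mul_left, hkl.tsum_add (hqs.sub hps), hqs.tsum_sub hps]
    _ ≤ 4 * ∑' j, p j * log (p j / q j) := by linarith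

end Sums

theorem stmt6_general {ι : Type*} {p q : ι → ℝ} (hp : ∀ j, 0 < p j) (hps : Summable p)
    (hmass : ∑' j, q j ≤ ∑' j, p j) (hclose : ∀ j, |q j - p j| ≤ (1 - exp (-1)) * p j) :
    (∀ j, |log (q j / p j)| ≤ 1) ∧
      (Summable fun j ↦ p j * log (q j / p j) ^ 2) ∧
      (Summable fun j ↦ p j * log (p j / q j)) ∧
      ∑' j, p j * log (q j / p j) ^ 2 ≤ 4 * ∑' j, p j * log (p j / q j) := by
  have hqs : Summable q := by
    simpa only [sub_add_cancel] using
      (Summable.of_norm_bounded (hps.mul_left (1 - exp (-1))) hclose).add hps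
  have hpq : ∀ j, exp (-2) * p j ≤ q j := fun j ↦ by
    have hexp : exp (-2) * p j ≤ exp (-1) * p j :=
      mul_le_mul_of_nonneg_right (exp_le_exp.2 (by norm_num)) (hp j).le
    linarith [(abs_le.1 (hclose j)).1]
  exact ⟨fun j ↦ abs_log_div_le_of_abs_sub_le (hp j) (hclose j),
    summable_mul_log_div_sq hp hpq hps hqs, summable_mul_log_div (exp_pos _) hp hpq hps hqs,
    tsum_mul_log_div_sq_le hp hpq hps hqs hmass⟩

/-- bounds on the log-likelihood ratio (Lemma S-MV of the paper):
(i) `|log(q_j/p_j)| ≤ 1` and (ii) the second moment of the log-likelihood ratio is at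
most `8` times the Kullback–Leibler divergence. -/
theorem stmt6 {ι : Type*} [Fintype ι]
    (p q : ι → ℝ) (hp : ∀ j, 0 < p j) (hq : ∀ j, 0 ≤ q j)
    (hp1 : ∑ j, p j = 1) (hq1 : ∑ j, q j = 1)
    (hclose : ∀ j, |q j - p j| ≤ p j / 2) :
    (∀ j, |Real.log (q j / p j)| ≤ 1) ∧
      ∑ j, p j * (Real.log (q j / p j)) ^ 2 ≤ 8 * ∑ j, p j * Real.log (p j / q j) := by
  obtain ⟨hlog, -, -, hle⟩ := stmt6_general hp .of_finite (by simp [hp1, hq1])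
    fun j ↦ (hclose j).trans (by nlinarith [hp j, exp_neg_one_lt_half])
  have hsq : 0 ≤ ∑' j, p j * log (q j / p j) ^ 2 :=
    tsum_nonneg fun j ↦ mul_nonneg (hp j).le (sq_nonneg _)
  simp only [tsum_fintype] at hle hsq
  exact ⟨hlog, by linarith⟩
end

section
/- Let K ≥ 1 be an integer and let S be a nonempty finite set of at most K items, where item j has utility û_j ≥ 0 and revenue r_j ∈ [0,1]. Let U = max{1, max_{j∈S} û_j}, fix ε₀ ∈ (0, 1/2], and set Δ = ε₀·U/K. For each j ∈ S let μ_j = round(û_j/Δ)·Δ and γ_j = round(û_j r_j/Δ)·Δ, where round(x) denotes a nearest integer to x. Then | (Σ_{j∈S} γ_j)/(1 + Σ_{j∈S} μ_j) − (Σ_{j∈S} û_j r_j)/(1 + Σ_{j∈S} û_j) | ≤ 6·ε₀. (Discretization error bound for the expected-revenue term; first part of Lemma 8 of the paper.) -/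
/-!
Write `A / B` for the exact ratio and `A' / B'` for the discretized one (`B` and `B'` include the
`1`), and let `q = A' / B'`. Then `q - A / B = ((A' - A) - q * (B' - B)) / B`. Rounding is monotone,
so `|q| ≤ 1` survives discretization; both errors `|A' - A|` and `|B' - B|` are at most
`|S| Δ / 2 ≤ ε₀ U / 2`; and `B ≥ U`. Hence the difference is at most `ε₀`. Eliminating `A'` rather
than `A` leaves the exact denominator in the quotient, so `B'` never has to be bounded below by `U`.
-/

section Field

variable {𝕜 : Type*} [Field 𝕜] [LinearOrder 𝕜] [IsStrictOrderedRing 𝕜]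

theorem abs_div_sub_div_le {a a' b b' : 𝕜} (hb : 0 < b) (ha' : |a'| ≤ b') :
    |a' / b' - a / b| ≤ (|a' - a| + |b' - b|) / b := by
  have hb' : 0 ≤ b' := (abs_nonneg a').trans ha'
  set q := a' / b' with hq
  have hq_mul : q * b' = a' :=
    div_mul_cancel_of_imp fun h ↦ abs_nonpos_iff.mp (ha'.trans_eq h)
  have hq_abs : |q| ≤ 1 := by
    rw [hq, abs_div, abs_of_nonneg hb']
    exact div_le_one_of_le₀ ha' hb'
  have hdiff : q - a / b = ((a' - a) - q * (b' - b)) / b := by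
    rw [mul_sub, hq_mul]
    field_simp
    ring
  rw [hdiff, abs_div, abs_of_pos hb]
  gcongr
  calc |(a' - a) - q * (b' - b)|
      ≤ |a' - a| + |q * (b' - b)| := abs_sub _ _
    _ = |a' - a| + |q| * |b' - b| := by rw [abs_mul]
    _ ≤ |a' - a| + |b' - b| := by
      gcongr
      exact mul_le_of_le_one_left (abs_nonneg _) hq_abs

variable {ι : Type*}

/-- The expected revenue `ESTR(S)` of the assortment `S` under the multinomial logit model, as a
function of the utilities `w` and of the utility-revenue products `v`. Taking the products as a
separate argument lets the same definition cover the discretized estimate, where `w = μ` and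
`v = γ` are rounded independently. -/
def expectedRevenue (S : Finset ι) (w v : ι → 𝕜) : 𝕜 :=
  (∑ j ∈ S, v j) / (1 + ∑ j ∈ S, w j)

theorem max_one_sup'_le_one_add_sum {S : Finset ι} (hS : S.Nonempty) {w : ι → 𝕜}
    (hw : ∀ j ∈ S, 0 ≤ w j) : max 1 (S.sup' hS w) ≤ 1 + ∑ j ∈ S, w j := by
  refine max_le (le_add_of_nonneg_right (Finset.sum_nonneg hw)) (Finset.sup'_le _ _ fun j hj ↦ ?_)
  exact (Finset.single_le_sum hw hj).trans (le_add_of_nonneg_left zero_le_one)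

end Field

section FloorRing

variable {𝕜 : Type*} [Field 𝕜] [LinearOrder 𝕜] [IsStrictOrderedRing 𝕜] [FloorRing 𝕜]

theorem monotone_round : Monotone (round : 𝕜 → ℤ) := fun x y hxy ↦ by
  rw [round_eq, round_eq]
  gcongr

-- Equality fails at half-integers, which `round` sends upwards.
theorem neg_round_le_round_neg (x : 𝕜) : -round x ≤ round (-x) := by
  have h : ((-1 : ℤ) : 𝕜) < (round x + round (-x) : ℤ) := by
    push_cast
    linarith [sub_half_lt_round x, sub_half_lt_round (-x)]
  have : -1 < round x + round (-x) := Int.cast_lt.mp h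
  lia

theorem abs_round_le_round {x y : 𝕜} (h : |y| ≤ x) : |round y| ≤ round x := by
  obtain ⟨hneg, hle⟩ := abs_le.mp h
  exact abs_le.mpr ⟨(neg_round_le_round_neg x).trans (monotone_round hneg), monotone_round hle⟩

/-- The integer multiple of the discretization step `Δ` nearest to `x`, with ties broken upwards
as in `round`: `μ_j` is the discretization of `û_j`, and `γ_j` that of `û_j r_j`. -/
def discretize (Δ x : 𝕜) : 𝕜 :=
  round (x / Δ) * Δ

theorem abs_discretize_sub_le {Δ : 𝕜} (hΔ : 0 < Δ) (x : 𝕜) : |discretize Δ x - x| ≤ Δ / 2 := by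
  calc |discretize Δ x - x|
      = |(round (x / Δ) - x / Δ) * Δ| := by
        rw [discretize, sub_mul, div_mul_cancel₀ x hΔ.ne']
    _ = |x / Δ - round (x / Δ)| * Δ := by rw [abs_mul, abs_sub_comm, abs_of_pos hΔ]
    _ ≤ 1 / 2 * Δ := by gcongr; exact abs_sub_round _
    _ = Δ / 2 := by ring

theorem abs_discretize_le_discretize {Δ x y : 𝕜} (hΔ : 0 ≤ Δ) (h : |y| ≤ x) :
    |discretize Δ y| ≤ discretize Δ x := by
  have hdiv : |y / Δ| ≤ x / Δ := by
    rw [abs_div, abs_of_nonneg hΔ]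
    gcongr
  rw [discretize, discretize, abs_mul, abs_of_nonneg hΔ]
  gcongr
  exact_mod_cast abs_round_le_round hdiv

variable {ι : Type*}

theorem abs_sum_discretize_sub_sum_le {Δ : 𝕜} (hΔ : 0 < Δ) (S : Finset ι) (f : ι → 𝕜) :
    |∑ j ∈ S, discretize Δ (f j) - ∑ j ∈ S, f j| ≤ S.card * (Δ / 2) := by
  calc |∑ j ∈ S, discretize Δ (f j) - ∑ j ∈ S, f j|
      = |∑ j ∈ S, (discretize Δ (f j) - f j)| := by rw [Finset.sum_sub_distrib]
    _ ≤ ∑ j ∈ S, |discretize Δ (f j) - f j| := Finset.abs_sum_le_sum_abs _ _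
    _ ≤ S.card • (Δ / 2) := Finset.sum_le_card_nsmul _ _ _ fun j _ ↦ abs_discretize_sub_le hΔ (f j)
    _ = S.card * (Δ / 2) := nsmul_eq_mul _ _

theorem abs_sum_discretize_le_sum_discretize {Δ : 𝕜} (hΔ : 0 ≤ Δ) {S : Finset ι} {w v : ι → 𝕜}
    (hvw : ∀ j ∈ S, |v j| ≤ w j) :
    |∑ j ∈ S, discretize Δ (v j)| ≤ ∑ j ∈ S, discretize Δ (w j) :=
  (Finset.abs_sum_le_sum_abs _ _).trans <|
    Finset.sum_le_sum fun j hj ↦ abs_discretize_le_discretize hΔ (hvw j hj)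

theorem abs_expectedRevenue_discretize_sub_le {Δ : 𝕜} (hΔ : 0 < Δ) {S : Finset ι} {w v : ι → 𝕜}
    (hvw : ∀ j ∈ S, |v j| ≤ w j) :
    |expectedRevenue S (fun j ↦ discretize Δ (w j)) (fun j ↦ discretize Δ (v j))
        - expectedRevenue S w v| ≤ S.card * Δ / (1 + ∑ j ∈ S, w j) := by
  have hw : 0 ≤ ∑ j ∈ S, w j := Finset.sum_nonneg fun j hj ↦ (abs_nonneg _).trans (hvw j hj)
  have hratio : |∑ j ∈ S, discretize Δ (v j)| ≤ 1 + ∑ j ∈ S, discretize Δ (w j) :=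
    (abs_sum_discretize_le_sum_discretize hΔ.le hvw).trans (le_add_of_nonneg_left zero_le_one)
  refine (abs_div_sub_div_le (by positivity) hratio).trans ?_
  rw [add_sub_add_left_eq_sub]
  gcongr
  linarith [abs_sum_discretize_sub_sum_le hΔ S v, abs_sum_discretize_sub_sum_le hΔ S w]

theorem stmt7_general (K : ℕ) (S : Finset ι) (hS : S.Nonempty) (hSK : S.card ≤ K)
    (u r : ι → 𝕜) (hu : ∀ j ∈ S, 0 ≤ u j) (hr : ∀ j ∈ S, |r j| ≤ 1)
    (ε₀ : 𝕜) (hε₀ : 0 < ε₀)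
    (U Δ : 𝕜) (hU : U = max 1 (S.sup' hS u)) (hΔ : Δ = ε₀ * U / K)
    (μ γ : ι → 𝕜)
    (hμ : ∀ j ∈ S, μ j = (round (u j / Δ) : 𝕜) * Δ)
    (hγ : ∀ j ∈ S, γ j = (round (u j * r j / Δ) : 𝕜) * Δ) :
    |(∑ j ∈ S, γ j) / (1 + ∑ j ∈ S, μ j)
        - (∑ j ∈ S, u j * r j) / (1 + ∑ j ∈ S, u j)| ≤ ε₀ := by
  have hK : (0 : 𝕜) < K := Nat.cast_pos.mpr (hS.card_pos.trans_le hSK)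
  have hU_pos : 0 < U := hU ▸ zero_lt_one.trans_le (le_max_left _ _)
  have hU_le : U ≤ 1 + ∑ j ∈ S, u j := hU ▸ max_one_sup'_le_one_add_sum hS hu
  have hΔ_pos : 0 < Δ := by rw [hΔ]; positivity
  have hur : ∀ j ∈ S, |u j * r j| ≤ u j := fun j hj ↦ by
    rw [abs_mul, abs_of_nonneg (hu j hj)]
    exact mul_le_of_le_one_right (hu j hj) (hr j hj)
  rw [Finset.sum_congr rfl hμ, Finset.sum_congr rfl hγ]
  refine (abs_expectedRevenue_discretize_sub_le hΔ_pos hur).trans ?_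
  rw [div_le_iff₀ (hU_pos.trans_le hU_le)]
  calc (S.card : 𝕜) * Δ ≤ K * Δ := by gcongr
    _ = ε₀ * U := by rw [hΔ, mul_div_cancel₀ _ hK.ne']
    _ ≤ ε₀ * (1 + ∑ j ∈ S, u j) := by gcongr

end FloorRing

/-- discretization error bound for the expected-revenue term
(first part of Lemma 8 of the paper). -/
theorem stmt7 {ι : Type*} (K : ℕ) (hK : 1 ≤ K)
    (S : Finset ι) (hS : S.Nonempty) (hSK : S.card ≤ K)
    (u r : ι → ℝ) (hu : ∀ j ∈ S, 0 ≤ u j) (hr : ∀ j ∈ S, r j ∈ Set.Icc (0 : ℝ) 1)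
    (ε₀ : ℝ) (hε₀ : ε₀ ∈ Set.Ioc (0 : ℝ) (1 / 2))
    (U Δ : ℝ) (hU : U = max 1 (S.sup' hS u)) (hΔ : Δ = ε₀ * U / K)
    (μ γ : ι → ℝ)
    (hμ : ∀ j ∈ S, μ j = (round (u j / Δ) : ℝ) * Δ)
    (hγ : ∀ j ∈ S, γ j = (round (u j * r j / Δ) : ℝ) * Δ) :
    |(∑ j ∈ S, γ j) / (1 + ∑ j ∈ S, μ j)
        - (∑ j ∈ S, u j * r j) / (1 + ∑ j ∈ S, u j)| ≤ 6 * ε₀ :=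
  (stmt7_general K S hS hSK u r hu (fun j hj ↦ abs_le.mpr ⟨by linarith [(hr j hj).1], (hr j hj).2⟩)
    ε₀ hε₀.1 U Δ hU hΔ μ γ hμ hγ).trans (by linarith [hε₀.1])
end

section
/- Let A, B, τ₁, τ₂ be real numbers with 0 ≤ A ≤ B and |τ₂| < B. Then | A/B − (A + τ₁)/(B + τ₂) | ≤ (|τ₁| + 2|τ₂|) / (B − |τ₂|). (Perturbation bound for ratios; the key algebraic step in the proof of Lemma 8 of the paper.) -/
theorem div_sub_add_div_add {K : Type*} [DivisionRing K] {a b s t : K} (hb : b ≠ 0)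
    (hbt : b + t ≠ 0) : a / b - (a + s) / (b + t) = (a / b * t - s) / (b + t) := by
  rw [eq_div_iff hbt, sub_mul, div_mul_cancel₀ _ hbt, mul_add, div_mul_cancel₀ _ hb,
    add_sub_add_left_eq_sub]

section NormedDivisionRing

variable {K : Type*} [NormedDivisionRing K] {a b s t : K}

theorem norm_div_sub_add_div_add_le (ht : ‖t‖ < ‖b‖) :
    ‖a / b - (a + s) / (b + t)‖ ≤ (‖s‖ + ‖a / b‖ * ‖t‖) / (‖b‖ - ‖t‖) := by
  have hgap : 0 < ‖b‖ - ‖t‖ := sub_pos.2 ht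
  have hden : ‖b‖ - ‖t‖ ≤ ‖b + t‖ := norm_sub_le_norm_add b t
  have hb : b ≠ 0 := norm_pos_iff.1 ((norm_nonneg t).trans_lt ht)
  have hbt : b + t ≠ 0 := norm_pos_iff.1 (hgap.trans_le hden)
  have hnum : ‖a / b * t - s‖ ≤ ‖s‖ + ‖a / b‖ * ‖t‖ :=
    calc ‖a / b * t - s‖ ≤ ‖a / b * t‖ + ‖s‖ := norm_sub_le _ _
      _ = ‖s‖ + ‖a / b‖ * ‖t‖ := by rw [norm_mul, add_comm]
  rw [div_sub_add_div_add hb hbt, norm_div]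
  gcongr

theorem stmt9_general (hab : ‖a‖ ≤ ‖b‖) (ht : ‖t‖ < ‖b‖) :
    ‖a / b - (a + s) / (b + t)‖ ≤ (‖s‖ + ‖t‖) / (‖b‖ - ‖t‖) := by
  have hratio : ‖a / b‖ ≤ 1 := by
    rw [norm_div]
    exact div_le_one_of_le₀ hab (norm_nonneg b)
  have hnum : ‖s‖ + ‖a / b‖ * ‖t‖ ≤ ‖s‖ + ‖t‖ := by
    gcongr
    exact mul_le_of_le_one_left (norm_nonneg t) hratio
  exact (norm_div_sub_add_div_add_le ht).trans
    (div_le_div_of_nonneg_right hnum (sub_pos.2 ht).le)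

end NormedDivisionRing

/-- perturbation bound for ratios. -/
theorem stmt9 (A B τ₁ τ₂ : ℝ) (hA : 0 ≤ A) (hAB : A ≤ B) (hτ₂ : |τ₂| < B) :
    |A / B - (A + τ₁) / (B + τ₂)| ≤ (|τ₁| + 2 * |τ₂|) / (B - |τ₂|) := by
  have h := stmt9_general (K := ℝ) (s := τ₁) (abs_le_abs_of_nonneg hA hAB)
    (hτ₂.trans_le (le_abs_self B))
  simp only [Real.norm_eq_abs, abs_of_nonneg (hA.trans hAB)] at h
  exact h.trans (div_le_div_of_nonneg_right (by linarith [abs_nonneg τ₂]) (sub_pos.2 hτ₂).le)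
end

section
/- Let N ≥ 1 and K ≥ 1 be integers. Fix utilities u_i ≥ 0 and revenues r_i ∈ [0,1] for i ∈ {1,…,N}, and define ESTR(S) = (Σ_{i∈S} u_i r_i)/(1 + Σ_{i∈S} u_i) for S ⊆ {1,…,N}. Suppose S ⊆ {1,…,N} with |S| ≤ K satisfies all of: (a) ESTR((S ∪ {i}) \ {j}) ≤ ESTR(S) for every i ∉ S and j ∈ S; (b) if |S| < K, then ESTR(S ∪ {i}) ≤ ESTR(S) for every i ∉ S; (c) ESTR(S \ {j}) ≤ ESTR(S) for every j ∈ S. Then ESTR(S') ≤ ESTR(S) for every S' ⊆ {1,…,N} with |S'| ≤ K. (Correctness of the greedy swapping heuristic when ω = 0: any assortment that cannot be improved by a single swap, addition, or deletion is a global maximizer of ESTR; this is the optimality claim in Proposition 2 of the paper.) -/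
/-!
Write `t` for the value at `S` of a ratio of two affine functions of the chosen items. Since
denominators are positive, a set is no better than `S` exactly when its *numerator minus `t` times
denominator* is no larger than that of `S` (Dinkelbach's linearization). This expression is the sum
of item weights `w` up to a constant, so `S` is also locally optimal for `A ↦ ∑ i ∈ A, w i`.
There, local optimality says that the weights in `S` are nonnegative and dominate those outside `S`,
and that the latter are nonpositive if `S` has room left. So exchanging `S` for any other admissible
set loses at least as much as it gains.
-/

open Finset

section

variable {ι : Type*}

theorem sum_le_sum_of_card_le_of_forall_le {M : Type*} [AddCommMonoid M] [PartialOrder M]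
    [IsOrderedAddMonoid M] {w : ι → M} {s t : Finset ι} (hcard : #s ≤ #t)
    (hle : ∀ i ∈ s, ∀ j ∈ t, w i ≤ w j) (hnonneg : ∀ j ∈ t, 0 ≤ w j) :
    ∑ i ∈ s, w i ≤ ∑ j ∈ t, w j := by
  obtain ⟨φ⟩ : Nonempty (s ↪ t) := Function.Embedding.nonempty_of_card_le (by simpa using hcard)
  calc ∑ i ∈ s, w i = ∑ i : s, w i := (sum_coe_sort s w).symm
    _ ≤ ∑ i : s, w (φ i) := sum_le_sum fun i _ ↦ hle i i.2 (φ i) (φ i).2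
    _ = ∑ j ∈ univ.map φ, w j := (sum_map univ φ fun j : t ↦ w j).symm
    _ ≤ ∑ j : t, w j := sum_le_univ_sum_of_nonneg fun j ↦ hnonneg j j.2
    _ = ∑ j ∈ t, w j := sum_coe_sort t w

/-- `S` has at most `K` elements and is a local maximizer of `f` for the neighbourhood of the greedy
swapping heuristic: no swap, no addition respecting the capacity `K`, and no deletion of a single
item increases `f`. -/
structure IsSwapOptimal [DecidableEq ι] {α : Type*} [LE α] (f : Finset ι → α) (K : ℕ)
    (S : Finset ι) : Prop where
  card_le : #S ≤ K
  swap_le : ∀ i ∉ S, ∀ j ∈ S, f (insert i (S.erase j)) ≤ f S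
  insert_le : #S < K → ∀ i ∉ S, f (insert i S) ≤ f S
  erase_le : ∀ j ∈ S, f (S.erase j) ≤ f S

namespace IsSwapOptimal

variable [DecidableEq ι] {K : ℕ} {S : Finset ι}

theorem imp {α β : Type*} [LE α] [LE β] {f : Finset ι → α} {g : Finset ι → β}
    (hS : IsSwapOptimal f K S) (hfg : ∀ A, #A ≤ K → f A ≤ f S → g A ≤ g S) :
    IsSwapOptimal g K S where
  card_le := hS.card_le
  swap_le i hi j hj := by
    refine hfg _ ?_ (hS.swap_le i hi j hj)
    calc #(insert i (S.erase j)) ≤ #(S.erase j) + 1 := card_insert_le _ _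
      _ = #S := card_erase_add_one hj
      _ ≤ K := hS.card_le
  insert_le hlt i hi := hfg _ ((card_insert_le i S).trans hlt) (hS.insert_le hlt i hi)
  erase_le j hj := hfg _ (card_erase_le.trans hS.card_le) (hS.erase_le j hj)

section Sum

variable {M : Type*} [AddCommGroup M] [PartialOrder M] [IsOrderedAddMonoid M] {w : ι → M}

theorem weight_nonneg (hS : IsSwapOptimal (fun A ↦ ∑ i ∈ A, w i) K S) {j : ι} (hj : j ∈ S) :
    0 ≤ w j := by
  simpa [sum_erase_eq_sub hj] using hS.erase_le j hj

theorem weight_le_weight (hS : IsSwapOptimal (fun A ↦ ∑ i ∈ A, w i) K S) {i j : ι} (hi : i ∉ S)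
    (hj : j ∈ S) : w i ≤ w j := by
  have hi' : i ∉ S.erase j := fun h ↦ hi (mem_of_mem_erase h)
  simpa [sum_insert hi', ← add_sum_erase S w hj] using hS.swap_le i hi j hj

theorem weight_nonpos (hS : IsSwapOptimal (fun A ↦ ∑ i ∈ A, w i) K S) (hlt : #S < K) {i : ι}
    (hi : i ∉ S) : w i ≤ 0 := by
  simpa [sum_insert hi] using hS.insert_le hlt i hi

theorem sum_le_sum (hS : IsSwapOptimal (fun A ↦ ∑ i ∈ A, w i) K S) {A : Finset ι} (hA : #A ≤ K) :
    ∑ i ∈ A, w i ≤ ∑ i ∈ S, w i := by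
  rw [← sum_sdiff_le_sum_sdiff]
  have hnonneg : ∀ j ∈ S \ A, 0 ≤ w j := fun j hj ↦ hS.weight_nonneg (mem_sdiff.1 hj).1
  rcases hS.card_le.lt_or_eq with hlt | rfl
  · calc ∑ i ∈ A \ S, w i ≤ 0 :=
          sum_nonpos fun i hi ↦ hS.weight_nonpos hlt (mem_sdiff.1 hi).2
      _ ≤ ∑ j ∈ S \ A, w j := sum_nonneg hnonneg
  · exact sum_le_sum_of_card_le_of_forall_le (card_sdiff_le_card_sdiff_iff.2 hA)
      (fun i hi j hj ↦ hS.weight_le_weight (mem_sdiff.1 hi).2 (mem_sdiff.1 hj).1) hnonneg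

end Sum

end IsSwapOptimal

/-- The objective of cardinality-constrained linear-fractional 0-1 programming, on sets of items.
The expected revenue of an assortment is the case `a₀ = 0`, `b₀ = 1`, `a i = u i * r i`,
`b i = u i`. -/
def linearFractional {𝕜 : Type*} [Field 𝕜] (a₀ b₀ : 𝕜) (a b : ι → 𝕜) (A : Finset ι) : 𝕜 :=
  (a₀ + ∑ i ∈ A, a i) / (b₀ + ∑ i ∈ A, b i)

theorem sum_sub_linearFractional_mul {𝕜 : Type*} [Field 𝕜] {a₀ b₀ : 𝕜} {a b : ι → 𝕜}
    {S : Finset ι} (hS : b₀ + ∑ i ∈ S, b i ≠ 0) :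
    ∑ i ∈ S, (a i - linearFractional a₀ b₀ a b S * b i) =
      linearFractional a₀ b₀ a b S * b₀ - a₀ := by
  have h : linearFractional a₀ b₀ a b S * (b₀ + ∑ i ∈ S, b i) = a₀ + ∑ i ∈ S, a i :=
    div_mul_cancel₀ _ hS
  rw [sum_sub_distrib, ← mul_sum]
  linear_combination -h

variable {𝕜 : Type*} [Field 𝕜] [LinearOrder 𝕜] [IsStrictOrderedRing 𝕜] {a₀ b₀ : 𝕜} {a b : ι → 𝕜}

theorem linearFractional_le_iff {A : Finset ι} {t : 𝕜} (hA : 0 < b₀ + ∑ i ∈ A, b i) :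
    linearFractional a₀ b₀ a b A ≤ t ↔ ∑ i ∈ A, (a i - t * b i) ≤ t * b₀ - a₀ := by
  rw [linearFractional, div_le_iff₀ hA, sum_sub_distrib, ← mul_sum]
  constructor <;> intro h <;> linarith

theorem linearFractional_le_linearFractional_iff {A S : Finset ι}
    (hA : 0 < b₀ + ∑ i ∈ A, b i) (hS : b₀ + ∑ i ∈ S, b i ≠ 0) :
    linearFractional a₀ b₀ a b A ≤ linearFractional a₀ b₀ a b S ↔
      ∑ i ∈ A, (a i - linearFractional a₀ b₀ a b S * b i) ≤
        ∑ i ∈ S, (a i - linearFractional a₀ b₀ a b S * b i) := by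
  rw [linearFractional_le_iff hA, sum_sub_linearFractional_mul hS]

theorem stmt10_general [DecidableEq ι] {K : ℕ}
    (hpos : ∀ A : Finset ι, #A ≤ K → 0 < b₀ + ∑ i ∈ A, b i)
    {S : Finset ι} (hS : IsSwapOptimal (linearFractional a₀ b₀ a b) K S)
    {A : Finset ι} (hA : #A ≤ K) :
    linearFractional a₀ b₀ a b A ≤ linearFractional a₀ b₀ a b S := by
  have hSne : b₀ + ∑ i ∈ S, b i ≠ 0 := (hpos S hS.card_le).ne'
  have hlin : IsSwapOptimal
      (fun B ↦ ∑ i ∈ B, (a i - linearFractional a₀ b₀ a b S * b i)) K S :=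
    hS.imp fun B hB ↦ (linearFractional_le_linearFractional_iff (hpos B hB) hSne).1
  exact (linearFractional_le_linearFractional_iff (hpos A hA) hSne).2 (hlin.sum_le_sum hA)

end

/-- correctness of the greedy swapping heuristic when ω = 0
(Proposition 2 of the paper): any assortment of size ≤ K that cannot be improved by a
single swap, addition, or deletion is a global maximizer of ESTR among assortments of
size ≤ K. -/
theorem stmt10 (N K : ℕ) (hN : 1 ≤ N) (hK : 1 ≤ K)
    (u r : Fin N → ℝ) (hu : ∀ i, 0 ≤ u i) (hr : ∀ i, r i ∈ Set.Icc (0 : ℝ) 1)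
    (ESTR : Finset (Fin N) → ℝ)
    (hESTR : ∀ S, ESTR S = (∑ i ∈ S, u i * r i) / (1 + ∑ i ∈ S, u i))
    (S : Finset (Fin N)) (hSK : S.card ≤ K)
    (hswap : ∀ i ∉ S, ∀ j ∈ S, ESTR (insert i (S.erase j)) ≤ ESTR S)
    (hadd : S.card < K → ∀ i ∉ S, ESTR (insert i S) ≤ ESTR S)
    (hdel : ∀ j ∈ S, ESTR (S.erase j) ≤ ESTR S) :
    ∀ S' : Finset (Fin N), S'.card ≤ K → ESTR S' ≤ ESTR S := by
  obtain rfl : ESTR = linearFractional 0 1 (fun i ↦ u i * r i) u :=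
    funext fun A ↦ by rw [hESTR, linearFractional, zero_add]
  exact fun _ ↦ stmt10_general
    (fun A _ ↦ add_pos_of_pos_of_nonneg one_pos (sum_nonneg fun i _ ↦ hu i))
    ⟨hSK, hswap, hadd, hdel⟩
end

section
/- Let N, K ≥ 1 and d ≥ 1 be integers, and fix utilities û_j > 0, revenues r_j ∈ [0,1] and feature vectors x_j ∈ ℝ^d for j ∈ {1,…,N}. For S ⊆ {1,…,N} define ESTR(S) = (Σ_{j∈S} û_j r_j)/(1+Σ_{j∈S} û_j), M_S = (Σ_{j∈S} û_j x_j x_jᵀ)/(1+Σ_{j∈S} û_j) − ((Σ_{j∈S} û_j x_j)/(1+Σ_{j∈S} û_j))((Σ_{j∈S} û_j x_j)/(1+Σ_{j∈S} û_j))ᵀ, CI(S) = sqrt(‖M_S‖_op), and for a unit vector y ∈ ℝ^d, CI^y(S) = sqrt(max{0, yᵀ M_S y}). Let ω ≥ 0, ε ≥ 0, α ≥ 1, let S* maximize ESTR(S) + min{1, ω·CI(S)} over all S with |S| ≤ K, and let y* be a unit eigenvector of M_{S*} for its largest eigenvalue. Suppose y is a unit vector with ⟨y, y*⟩ ≥ 1/α,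 and Ŝ with |Ŝ| ≤ K satisfies ESTR(Ŝ) + min{1, α·ω·CI^y(Ŝ)} + ε ≥ ESTR(S) + min{1, α·ω·CI^y(S)} for every S with |S| ≤ K. Then ESTR(Ŝ) + min{1, α·ω·CI(Ŝ)} + ε ≥ ESTR(S*) + min{1, ω·CI(S*)}. (Lemma A.1 of the paper: a good random direction turns a univariate approximate maximizer into an (α, ε)-approximate maximizer of the multivariate objective.) -/
/-!
If `v` is a unit eigenvector of a positive operator `T` with eigenvalue `μ`, then positivity of `T`
at the vector `y - ⟪v, y⟫ • v`, which is orthogonal to `v`, reads `⟪v, y⟫ ^ 2 * μ ≤ ⟪y, T y⟫`.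
For the top eigenvalue this says that the direction `y` retains at least the fraction
`⟪v, y⟫ ≥ 1 / α` of the spread `√‖T‖`, while no direction sees more than all of it. The first bound,
applied to the optimal set, and the second, applied to the approximate maximizer, enclose the
univariate comparison between the two.

The matrices `M_S` are positive semidefinite because they are covariance matrices: place the missing
probability mass at the origin and centre at the mean.
-/

section Spread

open scoped InnerProductSpace

variable {E : Type*} [NormedAddCommGroup E] [InnerProductSpace ℝ E]

/-- The largest standard deviation over all directions of a distribution with covariance operator
`T`. This is `CI(S)` for the covariance `M_S`. -/
noncomputable def maxSpread (T : E →L[ℝ] E) : ℝ :=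
  √‖T‖

/-- The standard deviation in the direction `y` of a distribution with covariance operator `T`.
This is `CI^y(S)` for the covariance `M_S`; the truncation at `0` follows the paper and has no
effect on positive operators. -/
noncomputable def spreadAlong (y : E) (T : E →L[ℝ] E) : ℝ :=
  √(max 0 ⟪y, T y⟫_ℝ)

theorem inner_map_self_le_opNorm (T : E →L[ℝ] E) {y : E} (hy : ‖y‖ ≤ 1) : ⟪y, T y⟫_ℝ ≤ ‖T‖ :=
  calc
    ⟪y, T y⟫_ℝ ≤ ‖y‖ * ‖T y‖ := real_inner_le_norm _ _
    _ ≤ 1 * ‖T‖ := mul_le_mul hy (T.unit_le_opNorm y hy) (norm_nonneg _) zero_le_one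
    _ = ‖T‖ := one_mul _

theorem spreadAlong_le_maxSpread (T : E →L[ℝ] E) {y : E} (hy : ‖y‖ ≤ 1) :
    spreadAlong y T ≤ maxSpread T :=
  Real.sqrt_le_sqrt (max_le (norm_nonneg T) (inner_map_self_le_opNorm T hy))

theorem sq_inner_mul_eigenvalue_le {T : E →ₗ[ℝ] E} (hT : T.IsPositive) {v : E} (hv : ‖v‖ = 1)
    {μ : ℝ} (hTv : T v = μ • v) (y : E) : ⟪v, y⟫_ℝ ^ 2 * μ ≤ ⟪y, T y⟫_ℝ := by
  have hvTy : ⟪v, T y⟫_ℝ = μ * ⟪v, y⟫_ℝ := by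
    rw [← hT.isSymmetric v y, hTv, real_inner_smul_left]
  have hpos := hT.inner_nonneg_right (y - ⟪v, y⟫_ℝ • v)
  simp only [map_sub, map_smul, hTv, inner_sub_left, inner_sub_right, real_inner_smul_left,
    real_inner_smul_right, hvTy, real_inner_self_eq_norm_sq, hv, real_inner_comm v y] at hpos
  linarith

theorem inner_mul_maxSpread_le_spreadAlong {T : E →L[ℝ] E} (hT : T.IsPositive) {v : E}
    (hv : ‖v‖ = 1) (hTv : T v = ‖T‖ • v) (y : E) :
    ⟪v, y⟫_ℝ * maxSpread T ≤ spreadAlong y T := by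
  refine Real.le_sqrt_of_sq_le ?_
  rw [mul_pow, maxSpread, Real.sq_sqrt (norm_nonneg T)]
  exact (sq_inner_mul_eigenvalue_le hT hv hTv y).trans (le_max_right _ _)

theorem maxSpread_le_mul_spreadAlong {T : E →L[ℝ] E} (hT : T.IsPositive) {v y : E}
    (hv : ‖v‖ = 1) (hTv : T v = ‖T‖ • v) {α : ℝ} (hα : 0 < α) (hvy : 1 / α ≤ ⟪v, y⟫_ℝ) :
    maxSpread T ≤ α * spreadAlong y T :=
  calc
    maxSpread T ≤ α * ⟪v, y⟫_ℝ * maxSpread T :=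
      le_mul_of_one_le_left (Real.sqrt_nonneg _) ((div_le_iff₀' hα).1 hvy)
    _ = α * (⟪v, y⟫_ℝ * maxSpread T) := mul_assoc _ _ _
    _ ≤ α * spreadAlong y T :=
      mul_le_mul_of_nonneg_left (inner_mul_maxSpread_le_spreadAlong hT hv hTv y) hα.le

end Spread

section Covariance

open Matrix

variable {ι n R : Type*}

/-- The covariance matrix of the distribution that gives the point `x i` the mass `p i`, for
`i ∈ s`, and puts the remaining mass `1 - ∑ i ∈ s, p i` at the origin; the origin contributes to
neither of the two moments. -/
def subprobCov [CommRing R] (s : Finset ι) (p : ι → R) (x : ι → n → R) : Matrix n n R :=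
  ∑ i ∈ s, p i • vecMulVec (x i) (x i) - vecMulVec (∑ i ∈ s, p i • x i) (∑ i ∈ s, p i • x i)

theorem subprobCov_eq_sum_centered [CommRing R] (s : Finset ι) (p : ι → R) (x : ι → n → R)
    {m : n → R} (hm : m = ∑ i ∈ s, p i • x i) :
    subprobCov s p x =
      ∑ i ∈ s, p i • vecMulVec (x i - m) (x i - m) + (1 - ∑ i ∈ s, p i) • vecMulVec m m := by
  have hleft : ∑ i ∈ s, p i • vecMulVec (x i) m = vecMulVec m m := by
    ext a b
    nth_rw 2 [hm]
    simp only [Matrix.sum_apply, Matrix.smul_apply, vecMulVec_apply, Finset.sum_apply,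
      Pi.smul_apply, smul_eq_mul, Finset.sum_mul, mul_assoc]
  have hright : ∑ i ∈ s, p i • vecMulVec m (x i) = vecMulVec m m := by
    simpa only [transpose_sum, transpose_smul, transpose_vecMulVec] using congrArg transpose hleft
  simp only [subprobCov, ← hm, vecMulVec_sub, sub_vecMulVec, smul_sub, Finset.sum_sub_distrib,
    hleft, hright, ← Finset.sum_smul, sub_smul, one_smul]
  abel

theorem posSemidef_subprobCov [Finite n] {s : Finset ι} {p : ι → ℝ} (hp : ∀ i ∈ s, 0 ≤ p i)
    (hp_sum : ∑ i ∈ s, p i ≤ 1) (x : ι → n → ℝ) : (subprobCov s p x).PosSemidef := by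
  have hvec (a : n → ℝ) : (vecMulVec a a).PosSemidef := posSemidef_vecMulVec_self_star a
  rw [subprobCov_eq_sum_centered s p x rfl]
  exact (posSemidef_sum s fun i hi => (hvec _).smul (hp i hi)).add
    ((hvec _).smul (sub_nonneg.2 hp_sum))

theorem subprobCov_const_mul [CommRing R] (s : Finset ι) (c : R) (w : ι → R) (x : ι → n → R) :
    subprobCov s (fun i => c * w i) x =
      c • ∑ i ∈ s, w i • vecMulVec (x i) (x i) -
        vecMulVec (c • ∑ i ∈ s, w i • x i) (c • ∑ i ∈ s, w i • x i) := by
  simp only [subprobCov, mul_smul, Finset.smul_sum]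

theorem posSemidef_normalized_cov [Finite n] {s : Finset ι} {w : ι → ℝ} (hw : ∀ i ∈ s, 0 ≤ w i)
    {z : ℝ} (hz : ∑ i ∈ s, w i ≤ z) (x : ι → n → ℝ) :
    (z⁻¹ • ∑ i ∈ s, w i • vecMulVec (x i) (x i) -
      vecMulVec (z⁻¹ • ∑ i ∈ s, w i • x i) (z⁻¹ • ∑ i ∈ s, w i • x i)).PosSemidef := by
  have hz_nonneg : 0 ≤ z := (Finset.sum_nonneg hw).trans hz
  rw [← subprobCov_const_mul]
  refine posSemidef_subprobCov (fun i hi => mul_nonneg (inv_nonneg.2 hz_nonneg) (hw i hi)) ?_ x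
  rw [← Finset.mul_sum]
  exact inv_mul_le_one_of_le₀ hz hz_nonneg

end Covariance

section Euclidean

open Matrix WithLp

theorem norm_toLp_two_eq_one_iff {n : Type*} [Fintype n] {v : n → ℝ} :
    ‖toLp 2 v‖ = 1 ↔ v ⬝ᵥ v = 1 := by
  rw [← pow_eq_one_iff_of_nonneg (norm_nonneg _) two_ne_zero, ← real_inner_self_eq_norm_sq,
    EuclideanSpace.inner_toLp_toLp, star_trivial]

theorem maxSpread_toEuclideanCLM {d : ℕ} (M : Matrix (Fin d) (Fin d) ℝ) :
    maxSpread (toEuclideanCLM (𝕜 := ℝ) M) = √(l2OpNorm M) :=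
  rfl

theorem spreadAlong_toEuclideanCLM {n : Type*} [Fintype n] [DecidableEq n] (y : n → ℝ)
    (M : Matrix n n ℝ) :
    spreadAlong (toLp 2 y) (toEuclideanCLM (𝕜 := ℝ) M) = √(max 0 (y ⬝ᵥ M *ᵥ y)) := by
  rw [spreadAlong, inner_toEuclideanCLM]

theorem isPositive_toEuclideanCLM_iff {n : Type*} [Fintype n] [DecidableEq n]
    {M : Matrix n n ℝ} : (toEuclideanCLM (𝕜 := ℝ) M).IsPositive ↔ M.PosSemidef :=
  isPositive_toEuclideanLin_iff

end Euclidean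

open scoped InnerProductSpace in
theorem stmt11_general {E : Type*} [NormedAddCommGroup E] [InnerProductSpace ℝ E] {ι : Type*}
    {C : Set ι} (f : ι → ℝ) (T : ι → E →L[ℝ] E) {φ : ℝ → ℝ} (hφ : Monotone φ) {ω ε α : ℝ}
    (hω : 0 ≤ ω) (hα : 0 < α) {a b : ι} (ha : a ∈ C)
    (hTa : (T a).IsPositive) {v y : E} (hv : ‖v‖ = 1) (hTv : T a v = ‖T a‖ • v)
    (hy : ‖y‖ ≤ 1) (hvy : 1 / α ≤ ⟪v, y⟫_ℝ)
    (hb : ∀ i ∈ C,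
      f i + φ (α * ω * spreadAlong y (T i)) ≤ f b + φ (α * ω * spreadAlong y (T b)) + ε) :
    f a + φ (ω * maxSpread (T a)) ≤ f b + φ (α * ω * maxSpread (T b)) + ε := by
  have hspread_a : ω * maxSpread (T a) ≤ α * ω * spreadAlong y (T a) := by
    rw [mul_comm α ω, mul_assoc]
    exact mul_le_mul_of_nonneg_left (maxSpread_le_mul_spreadAlong hTa hv hTv hα hvy) hω
  have hspread_b : α * ω * spreadAlong y (T b) ≤ α * ω * maxSpread (T b) :=
    mul_le_mul_of_nonneg_left (spreadAlong_le_maxSpread (T b) hy) (mul_nonneg hα.le hω)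
  calc
    f a + φ (ω * maxSpread (T a)) ≤ f a + φ (α * ω * spreadAlong y (T a)) := by
      gcongr; exact hφ hspread_a
    _ ≤ f b + φ (α * ω * spreadAlong y (T b)) + ε := hb a ha
    _ ≤ f b + φ (α * ω * maxSpread (T b)) + ε := by
      gcongr; exact hφ hspread_b

open scoped Matrix in
/-- Lemma A.1 of the paper: a good random direction turns a univariate
approximate maximizer into an (α, ε)-approximate maximizer of the multivariate
objective.  Since `Mmat S*` is positive semidefinite, its largest eigenvalue equals its
operator norm, so `y*` being a unit top eigenvector is expressed by the eigenvalue
equation with eigenvalue `l2OpNorm (Mmat S*)`. -/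
theorem stmt11 (N K d : ℕ) (hN : 1 ≤ N) (hK : 1 ≤ K) (hd : 1 ≤ d)
    (u r : Fin N → ℝ) (x : Fin N → Fin d → ℝ)
    (hu : ∀ j, 0 < u j) (hr : ∀ j, r j ∈ Set.Icc (0 : ℝ) 1)
    (ESTR : Finset (Fin N) → ℝ)
    (hESTR : ∀ S, ESTR S = (∑ j ∈ S, u j * r j) / (1 + ∑ j ∈ S, u j))
    (Mmat : Finset (Fin N) → Matrix (Fin d) (Fin d) ℝ)
    (hM : ∀ S, Mmat S =
        (1 + ∑ j ∈ S, u j)⁻¹ • (∑ j ∈ S, u j • Matrix.vecMulVec (x j) (x j))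
          - Matrix.vecMulVec ((1 + ∑ j ∈ S, u j)⁻¹ • ∑ j ∈ S, u j • x j)
              ((1 + ∑ j ∈ S, u j)⁻¹ • ∑ j ∈ S, u j • x j))
    (CI : Finset (Fin N) → ℝ) (hCI : ∀ S, CI S = Real.sqrt (l2OpNorm (Mmat S)))
    (CIy : (Fin d → ℝ) → Finset (Fin N) → ℝ)
    (hCIy : ∀ y S, CIy y S = Real.sqrt (max 0 (y ⬝ᵥ (Mmat S).mulVec y)))
    (ω ε α : ℝ) (hω : 0 ≤ ω) (hε : 0 ≤ ε) (hα : 1 ≤ α)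
    (Sstar : Finset (Fin N)) (hSstarK : Sstar.card ≤ K)
    (hSstarOpt : ∀ S : Finset (Fin N), S.card ≤ K →
      ESTR S + min 1 (ω * CI S) ≤ ESTR Sstar + min 1 (ω * CI Sstar))
    (ystar : Fin d → ℝ) (hystar : ystar ⬝ᵥ ystar = 1)
    (heig : (Mmat Sstar).mulVec ystar = l2OpNorm (Mmat Sstar) • ystar)
    (y : Fin d → ℝ) (hy : y ⬝ᵥ y = 1) (hyy : 1 / α ≤ y ⬝ᵥ ystar)
    (Shat : Finset (Fin N)) (hShatK : Shat.card ≤ K)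
    (hShat : ∀ S : Finset (Fin N), S.card ≤ K →
      ESTR S + min 1 (α * ω * CIy y S) ≤ ESTR Shat + min 1 (α * ω * CIy y Shat) + ε) :
    ESTR Sstar + min 1 (ω * CI Sstar) ≤ ESTR Shat + min 1 (α * ω * CI Shat) + ε := by
  simp only [hCI, hCIy, ← maxSpread_toEuclideanCLM, ← spreadAlong_toEuclideanCLM] at hShat ⊢
  exact stmt11_general (C := {S | S.card ≤ K}) ESTR
    (fun S => Matrix.toEuclideanCLM (𝕜 := ℝ) (Mmat S)) (monotone_const.min monotone_id) hω
    (one_pos.trans_le hα) hSstarK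
    (isPositive_toEuclideanCLM_iff.2 (hM _ ▸
      posSemidef_normalized_cov (fun j _ => (hu j).le) (le_add_of_nonneg_left zero_le_one) x))
    (norm_toLp_two_eq_one_iff.2 hystar) (congrArg (WithLp.toLp 2) heig)
    (norm_toLp_two_eq_one_iff.2 hy).le
    (by rwa [EuclideanSpace.inner_toLp_toLp, star_trivial]) hShat
end
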